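/- arXiv:1801.04702 — 8 statements merged into one kernel-verified Lean document; each statement's English description precedes it below -/
import Mathlib

section
/- Let n ≥ 3 be odd, let T be a regular tournament on n vertices, let x be a vertex of T, and let Q be a set of unordered pairs of distinct vertices. If the number of vertices y with {x,y} ∈ Q and x→y in T is strictly less than (n−1)/2, then there exists a tournament T' on the same vertex set agreeing with T on Q in which x is not a vertex of maximum out-degree. -/
/-- A tournament: irreflexive, and for distinct vertices exactly one orientation holds. -/
def IsTournament {V : Type*} (r : V → V → Prop) : Prop :=
  (∀ x, ¬ r x x) ∧ ∀ x y : V, x ≠ y → (r x y ↔ ¬ r y x)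

open Classical in
/-- Out-degree of a vertex: number of `y` with `r x y`. -/
noncomputable def outDeg {V : Type*} [Fintype V] (r : V → V → Prop) (x : V) : ℕ :=
  (Finset.univ.filter fun y => r x y).card

open Classical in
/-- In-degree of a vertex: number of `y` with `r y x`. -/
noncomputable def inDeg {V : Type*} [Fintype V] (r : V → V → Prop) (x : V) : ℕ :=
  (Finset.univ.filter fun y => r y x).card

/-- A king: reaches every other vertex by a path of length at most 2. -/
def IsKing {V : Type*} (r : V → V → Prop) (x : V) : Prop :=
  ∀ y : V, y ≠ x → r x y ∨ ∃ z, r x z ∧ r z y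

/-- A vertex of maximum out-degree. -/
def IsMOD {V : Type*} [Fintype V] (r : V → V → Prop) (x : V) : Prop :=
  ∀ y : V, outDeg r y ≤ outDeg r x

/-- `r'` agrees with `r` on the set `Q` of unordered pairs. -/
def AgreesOn {V : Type*} (r r' : V → V → Prop) (Q : Set (Sym2 V)) : Prop :=
  ∀ y z : V, s(y, z) ∈ Q → (r' y z ↔ r y z)

open Classical in
/-- odd regular case: if fewer than `(n-1)/2` out-arcs at `x` are covered
by `Q`, some tournament agreeing with `T` on `Q` has `x` not of maximum out-degree. -/
theorem adversary_odd_out {V : Type*} [Fintype V] (r : V → V → Prop)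
    (hT : IsTournament r) (hn : 3 ≤ Fintype.card V) (hodd : Odd (Fintype.card V))
    (hreg : ∀ y : V, outDeg r y = (Fintype.card V - 1) / 2)
    (x : V) (Q : Set (Sym2 V)) (hQ : ∀ p ∈ Q, ¬ p.IsDiag)
    (hfew : (Finset.univ.filter fun y : V => s(x, y) ∈ Q ∧ r x y).card
              < (Fintype.card V - 1) / 2) :
    ∃ r' : V → V → Prop, IsTournament r' ∧ AgreesOn r r' Q ∧ ¬ IsMOD r' x := by
  have hex : ∃ y, r x y ∧ s(x, y) ∉ Q := by
    by_contra hcon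
    push Not at hcon
    have h1 := hreg x
    unfold outDeg at h1
    have h2 : (Finset.univ.filter fun y : V => r x y).card ≤
        (Finset.univ.filter fun y : V => s(x, y) ∈ Q ∧ r x y).card := by
      apply Finset.card_le_card
      intro y hy
      simp only [Finset.mem_filter, Finset.mem_univ, true_and] at hy ⊢
      exact ⟨hcon y hy, hy⟩
    omega
  obtain ⟨y, hxy, hyQ⟩ := hex
  have hne : x ≠ y := by
    rintro rfl
    exact hT.1 _ hxy
  have hyx : ¬ r y x := (hT.2 x y hne).1 hxy
  refine ⟨fun a b => (r a b ∧ ¬ (a = x ∧ b = y)) ∨ (a = y ∧ b = x), ⟨?_, ?_⟩, ?_, ?_⟩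
  · rintro a (h | h)
    · exact hT.1 a h.1
    · exact hne (h.2.symm.trans h.1)
  · intro a b hab
    have h1 := hT.2 a b hab
    grind
  · intro a b hab
    have h1 : ¬ (a = x ∧ b = y) := by
      rintro ⟨rfl, rfl⟩
      exact hyQ hab
    have h2 : ¬ (a = y ∧ b = x) := by
      rintro ⟨rfl, rfl⟩
      rw [Sym2.eq_swap] at hab
      exact hyQ hab
    simp only [h1, h2, not_false_eq_true, and_true, or_false]
  · intro hM
    have h := hM y
    have hx := hreg x
    have hy := hreg y
    unfold outDeg at h hx hy
    have h1 : (Finset.univ.filter fun b : V =>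
        (r x b ∧ ¬ (x = x ∧ b = y)) ∨ (x = y ∧ b = x)).card ≤
        (Finset.univ.filter fun b : V => r x b).card := by
      apply Finset.card_le_card
      intro b hb
      simp only [Finset.mem_filter, Finset.mem_univ, true_and] at hb ⊢
      rcases hb with hb | hb
      · exact hb.1
      · exact absurd hb.1 hne
    have h2 : (Finset.univ.filter fun b : V => r y b).card <
        (Finset.univ.filter fun b : V =>
        (r y b ∧ ¬ (y = x ∧ b = y)) ∨ (y = y ∧ b = x)).card := by
      apply Finset.card_lt_card
      rw [Finset.ssubset_iff_of_subset]
      · refine ⟨x, ?_, ?_⟩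
        · simp
        · simpa using hyx
      · intro b hb
        simp only [Finset.mem_filter, Finset.mem_univ, true_and] at hb ⊢
        exact Or.inl ⟨hb, fun hh => hne hh.1.symm⟩
    have h4 : (Finset.univ.filter fun b : V =>
        (r y b ∧ ¬ (y = x ∧ b = y)) ∨ (y = y ∧ b = x)).card ≤
        (Finset.univ.filter fun b : V =>
        (r x b ∧ ¬ (x = x ∧ b = y)) ∨ (x = y ∧ b = x)).card := by
      convert h
    omega
end

section
/- Let n ≥ 3 be odd, let T be a regular tournament on n vertices, let x and y be distinct vertices of T, and let Q be a set of unordered pairs of distinct vertices. If the number of vertices z with {y,z} ∈ Q and z→y in T is strictly less than (n−1)/2, then there exists a tournament T' on the same vertex set agreeing with T on Q in which y has strictly larger out-degree than x; in particular, x is not a vertex of maximum out-degree in T'. -/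
open Classical in
/-- odd regular case: if fewer than `(n-1)/2` in-arcs at `y` are covered
by `Q`, some tournament agreeing with `T` on `Q` gives `y` strictly larger out-degree
than `x`; in particular `x` is not a vertex of maximum out-degree there. -/
theorem adversary_odd_in {V : Type*} [Fintype V] (r : V → V → Prop)
    (hT : IsTournament r) (hn : 3 ≤ Fintype.card V) (hodd : Odd (Fintype.card V))
    (hreg : ∀ w : V, outDeg r w = (Fintype.card V - 1) / 2)
    (x y : V) (hxy : x ≠ y) (Q : Set (Sym2 V)) (hQ : ∀ p ∈ Q, ¬ p.IsDiag)
    (hfew : (Finset.univ.filter fun z : V => s(y, z) ∈ Q ∧ r z y).card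
              < (Fintype.card V - 1) / 2) :
    ∃ r' : V → V → Prop, IsTournament r' ∧ AgreesOn r r' Q ∧
      outDeg r' x < outDeg r' y ∧ ¬ IsMOD r' x := by
  obtain ⟨hirr, htot⟩ := hT
  have hz : ∃ z, r z y ∧ s(y, z) ∉ Q := by
    by_contra! hcon
    have h1 : (Finset.univ : Finset V) ⊆
        (Finset.univ.filter fun z : V => s(y, z) ∈ Q ∧ r z y) ∪
          ((Finset.univ.filter fun z => r y z) ∪ {y}) := by
      intro z _
      simp only [Finset.mem_union, Finset.mem_filter, Finset.mem_univ, true_and,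
        Finset.mem_singleton]
      by_cases hzy : z = y
      · exact Or.inr (Or.inr hzy)
      · by_cases hr : r z y
        · exact Or.inl ⟨hcon z hr, hr⟩
        · exact Or.inr (Or.inl ((htot y z (Ne.symm hzy)).2 hr))
    have h2 := Finset.card_le_card h1
    have h3 := Finset.card_union_le
      (Finset.univ.filter fun z : V => s(y, z) ∈ Q ∧ r z y)
      ((Finset.univ.filter fun z => r y z) ∪ {y})
    have h4 := Finset.card_union_le (Finset.univ.filter fun z => r y z) {y}
    have h5 := hreg y
    unfold outDeg at h5
    rw [Finset.card_univ] at h2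
    rw [Finset.card_singleton] at h4
    omega
  obtain ⟨z, hzy, hzQ⟩ := hz
  have hne : z ≠ y := by
    rintro rfl
    exact hirr _ hzy
  have hyz : ¬ r y z := (htot z y hne).1 hzy
  let r' : V → V → Prop := fun a b => (r a b ∧ ¬ (a = z ∧ b = y)) ∨ (a = y ∧ b = z)
  have hlt : outDeg r' x < outDeg r' y := by
    have hx : outDeg r' x ≤ outDeg r x := by
      unfold outDeg
      apply Finset.card_le_card
      intro b
      simp only [Finset.mem_filter, Finset.mem_univ, true_and, r']
      rintro (h | h)
      · exact h.1
      · exact absurd h.1 hxy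
    have hy : outDeg r y < outDeg r' y := by
      unfold outDeg
      apply Finset.card_lt_card
      rw [Finset.ssubset_iff_of_subset]
      · exact ⟨z, by simp [r'], by simpa using hyz⟩
      · intro b
        simp only [Finset.mem_filter, Finset.mem_univ, true_and, r']
        intro h
        exact Or.inl ⟨h, fun h' => hne h'.1.symm⟩
    rw [hreg] at hx hy
    omega
  refine ⟨r', ⟨?_, ?_⟩, ?_, hlt, fun h => absurd (h y) (not_le.2 hlt)⟩
  · rintro a (h | h)
    · exact hirr a h.1
    · exact hne (h.2.symm.trans h.1)
  · intro a b hab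
    have := htot a b hab
    simp only [r']
    by_cases h1 : a = z ∧ b = y
    · obtain ⟨rfl, rfl⟩ := h1
      simp [hne]
    · by_cases h2 : a = y ∧ b = z
      · obtain ⟨rfl, rfl⟩ := h2
        simp [hab]
      · tauto
  · intro a b hab
    have h1 : ¬ (a = z ∧ b = y) := by
      rintro ⟨rfl, rfl⟩
      exact hzQ (Sym2.eq_swap ▸ hab)
    have h2 : ¬ (a = y ∧ b = z) := by
      rintro ⟨rfl, rfl⟩
      exact hzQ hab
    simp only [r']
    tauto
end

section
/- Let n ≥ 2 be even, let T be an almost regular tournament on n vertices, let x be a vertex of T, and let Q be a set of unordered pairs of distinct vertices. If the number of vertices y with {x,y} ∈ Q and x→y in T is strictly less than n/2, then there exists a tournament T' on the same vertex set agreeing with T on Q in which x is not a vertex of maximum out-degree. -/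
open Classical in
/-- even almost regular case: if fewer than `n/2` out-arcs at `x` are
covered by `Q`, some tournament agreeing with `T` on `Q` has `x` not of maximum
out-degree. -/
theorem adversary_even_out {V : Type*} [Fintype V] (r : V → V → Prop)
    (hT : IsTournament r) (hn : 2 ≤ Fintype.card V) (heven : Even (Fintype.card V))
    (har : ∀ w : V, outDeg r w = Fintype.card V / 2 ∨ outDeg r w = Fintype.card V / 2 - 1)
    (x : V) (Q : Set (Sym2 V)) (hQ : ∀ p ∈ Q, ¬ p.IsDiag)
    (hfew : (Finset.univ.filter fun y : V => s(x, y) ∈ Q ∧ r x y).card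
              < Fintype.card V / 2) :
    ∃ r' : V → V → Prop, IsTournament r' ∧ AgreesOn r r' Q ∧ ¬ IsMOD r' x := by
  classical
  obtain ⟨m, hm⟩ := heven
  have hm2 : Fintype.card V / 2 = m := by omega
  rw [hm2] at hfew
  simp only [hm2] at har
  rcases har x with hx | hx
  · have hex : ∃ y, r x y ∧ s(x, y) ∉ Q := by
      by_contra hcon
      push Not at hcon
      have : (Finset.univ.filter fun y : V => s(x, y) ∈ Q ∧ r x y)
          = Finset.univ.filter fun y => r x y := by
        ext y
        simp only [Finset.mem_filter, Finset.mem_univ, true_and]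
        exact ⟨fun h => h.2, fun h => ⟨hcon y h, h⟩⟩
      rw [this] at hfew
      unfold outDeg at hx
      omega
    obtain ⟨y, hxy, hyQ⟩ := hex
    have hne : x ≠ y := by
      rintro rfl
      exact hT.1 _ hxy
    have hyx : ¬ r y x := (hT.2 x y hne).1 hxy
    let r' : V → V → Prop := fun a b => (r a b ∧ ¬ (a = x ∧ b = y)) ∨ (a = y ∧ b = x)
    refine ⟨r', ⟨?_, ?_⟩, ?_, ?_⟩
    · intro a h
      rcases h with h | h
      · exact hT.1 _ h.1
      · exact hne (h.2.symm.trans h.1)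
    · intro a b hab
      have := hT.2 a b hab
      simp only [r']
      by_cases h1 : a = x ∧ b = y
      · obtain ⟨rfl, rfl⟩ := h1
        simp [hab]
      · by_cases h2 : a = y ∧ b = x
        · obtain ⟨rfl, rfl⟩ := h2
          simp [hab]
        · have h3 : ¬ (b = x ∧ a = y) := fun h => h2 ⟨h.2, h.1⟩
          have h4 : ¬ (b = y ∧ a = x) := fun h => h1 ⟨h.2, h.1⟩
          simp [h1, h2, h3, h4, this]
    · intro a b hab
      have h1 : ¬ (a = x ∧ b = y) := by
        rintro ⟨rfl, rfl⟩
        exact hyQ hab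
      have h2 : ¬ (a = y ∧ b = x) := by
        rintro ⟨rfl, rfl⟩
        rw [Sym2.eq_swap] at hab
        exact hyQ hab
      simp only [r']
      tauto
    · intro hmod
      have h1 : outDeg r' x < outDeg r x := by
        unfold outDeg
        apply Finset.card_lt_card
        rw [Finset.ssubset_iff_of_subset]
        · exact ⟨y, by simp [hxy], by simp [r', hne]⟩
        · intro z
          simp only [Finset.mem_filter, Finset.mem_univ, true_and, r']
          rintro (h | h)
          · exact h.1
          · exact absurd h.1 hne
      have h2 : outDeg r y < outDeg r' y := by
        unfold outDeg
        apply Finset.card_lt_card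
        rw [Finset.ssubset_iff_of_subset]
        · exact ⟨x, by simp [r'], by simp [hyx]⟩
        · intro z
          simp only [Finset.mem_filter, Finset.mem_univ, true_and, r']
          exact fun h => Or.inl ⟨h, fun h' => hne h'.1.symm⟩
      have h3 := hmod y
      rcases har y with h | h <;> omega
  · refine ⟨r, hT, fun _ _ _ => Iff.rfl, fun hmod => ?_⟩
    have hall : ∀ w, outDeg r w = m - 1 := by
      intro w
      have := hmod w
      rcases har w with h | h <;> omega
    have hsum : ∑ w, outDeg r w = ∑ w, inDeg r w := by
      simp only [outDeg, inDeg, Finset.card_filter]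
      exact Finset.sum_comm
    have hadd : ∀ w, outDeg r w + inDeg r w + 1 = Fintype.card V := by
      intro w
      have hin : (Finset.univ.filter fun y => ¬ r w y)
          = insert w (Finset.univ.filter fun y => r y w) := by
        ext z
        simp only [Finset.mem_filter, Finset.mem_univ, true_and, Finset.mem_insert]
        by_cases h : z = w
        · subst h
          simp [hT.1]
        · simp [h, hT.2 z w h]
      have hc := Finset.card_filter_add_card_filter_not
        (s := (Finset.univ : Finset V)) (fun y => r w y)
      rw [hin, Finset.card_insert_of_notMem (by simp [hT.1]), Finset.card_univ] at hc
      unfold outDeg inDeg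
      omega
    have hin : ∀ w, inDeg r w = m := by
      intro w
      have := hadd w
      have := hall w
      omega
    simp only [hall, hin, Finset.sum_const, Finset.card_univ, smul_eq_mul] at hsum
    have := Nat.eq_of_mul_eq_mul_left (by omega) hsum
    omega
end

section
/- Let n ≥ 2 be even, let T be an almost regular tournament on n vertices, let x and y be distinct vertices of T, and let Q be a set of unordered pairs of distinct vertices. If the number of vertices z with {y,z} ∈ Q and z→y in T is at most n/2 − 2, then there exists a tournament T' on the same vertex set agreeing with T on Q in which y has strictly larger out-degree than x; in particular, x is not a vertex of maximum out-degree in T'. -/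
open Classical in
/-- even almost regular case: if at most `n/2 - 2` in-arcs at `y` are
covered by `Q`, some tournament agreeing with `T` on `Q` gives `y` strictly larger
out-degree than `x`; in particular `x` is not of maximum out-degree there. -/
theorem adversary_even_in {V : Type*} [Fintype V] (r : V → V → Prop)
    (hT : IsTournament r) (hn : 2 ≤ Fintype.card V) (heven : Even (Fintype.card V))
    (har : ∀ w : V, outDeg r w = Fintype.card V / 2 ∨ outDeg r w = Fintype.card V / 2 - 1)
    (x y : V) (hxy : x ≠ y) (Q : Set (Sym2 V)) (hQ : ∀ p ∈ Q, ¬ p.IsDiag)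
    (hfew : (Finset.univ.filter fun z : V => s(y, z) ∈ Q ∧ r z y).card
              ≤ Fintype.card V / 2 - 2) :
    ∃ r' : V → V → Prop, IsTournament r' ∧ AgreesOn r r' Q ∧
      outDeg r' x < outDeg r' y ∧ ¬ IsMOD r' x := by
  obtain ⟨h1, h2⟩ := hT
  let r' : V → V → Prop := fun a b =>
    (a = y ∧ b ≠ y ∧ (r y b ∨ s(y, b) ∉ Q)) ∨ (a ≠ y ∧ r a b ∧ ¬ (b = y ∧ s(y, a) ∉ Q))
  have hy : outDeg r' y + 1 +
      (Finset.univ.filter fun z : V => s(y, z) ∈ Q ∧ r z y).card = Fintype.card V := by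
    have e : (Finset.univ.filter fun b => r' y b)ᶜ =
        insert y (Finset.univ.filter fun z : V => s(y, z) ∈ Q ∧ r z y) := by
      ext b
      by_cases hb : b = y
      · simp [r', hb]
      · have := h2 y b (Ne.symm hb)
        simp only [r', Finset.mem_compl, Finset.mem_filter, Finset.mem_univ, true_and,
          Finset.mem_insert]
        tauto
    have h3 := Finset.card_add_card_compl (Finset.univ.filter fun b => r' y b)
    rw [e, Finset.card_insert_of_notMem (by simp [h1])] at h3
    have h6 : outDeg r' y = (Finset.univ.filter fun b => r' y b).card := by
      unfold outDeg
      congr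
    omega
  have hx : outDeg r' x ≤ outDeg r x := by
    unfold outDeg
    apply Finset.card_le_card
    intro b
    simp only [r', Finset.mem_filter, Finset.mem_univ, true_and]
    tauto
  have hlt : outDeg r' x < outDeg r' y := by
    obtain ⟨k, hk⟩ := heven
    by_cases hk1 : k = 1
    · have hc : (Finset.univ.filter fun z : V => s(y, z) ∈ Q ∧ r z y).card = 0 := by omega
      have hn' : ¬ (s(y, x) ∈ Q ∧ r x y) := by
        intro h
        rw [Finset.card_eq_zero] at hc
        have : x ∈ (Finset.univ.filter fun z : V => s(y, z) ∈ Q ∧ r z y) := by simpa using h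
        rw [hc] at this
        simp at this
      have hd : outDeg r' x + 2 ≤ Fintype.card V := by
        have h3 := Finset.card_add_card_compl (Finset.univ.filter fun b => r' x b)
        have h4 : ({x, y} : Finset V) ⊆ (Finset.univ.filter fun b => r' x b)ᶜ := by
          intro b hb
          simp only [Finset.mem_insert, Finset.mem_singleton] at hb
          simp only [r', Finset.mem_compl, Finset.mem_filter, Finset.mem_univ, true_and]
          rcases hb with rfl | rfl
          · have := h1 b
            tauto
          · tauto
        have h5 := Finset.card_le_card h4
        rw [Finset.card_pair hxy] at h5
        have h6 : outDeg r' x = (Finset.univ.filter fun b => r' x b).card := by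
          unfold outDeg
          congr
        omega
      omega
    · have := har x
      omega
  refine ⟨r', ⟨?_, ?_⟩, ?_, hlt, fun h => absurd (h y) (by omega)⟩
  · intro a
    have := h1 a
    simp only [r']
    tauto
  · intro a b hab
    have h3 := h2 a b hab
    simp only [r']
    by_cases ha : a = y
    · subst ha
      have hb : b ≠ a := Ne.symm hab
      tauto
    · by_cases hb : b = y
      · subst hb
        tauto
      · tauto
  · intro a b hab
    have h0 : a ≠ b := fun h => hQ _ hab (by simp [h])
    simp only [r']
    by_cases ha : a = y
    · subst ha
      have hb : b ≠ a := Ne.symm h0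
      tauto
    · by_cases hb : b = y
      · subst hb
        rw [Sym2.eq_swap] at hab
        tauto
      · tauto
end

section
/- Let n ≥ 3 be odd, let T be a regular tournament on n vertices, let x be a vertex of T, and let Q be a finite set of unordered pairs of distinct vertices. If in every tournament T' on the same vertex set that agrees with T on Q the vertex x is a vertex of maximum out-degree, then |Q| ≥ (n−1)²/2. -/
open Classical in
theorem aux_arc_mem {V : Type*} [Fintype V] (r : V → V → Prop)
    (hT : IsTournament r) (k : ℕ) (hreg : ∀ y : V, outDeg r y = k)
    (x : V) (Q : Finset (Sym2 V))
    (hcert : ∀ r' : V → V → Prop, IsTournament r' → AgreesOn r r' ↑Q → IsMOD r' x)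
    (a b : V) (hab : r a b) (hb : b ≠ x) : s(a, b) ∈ Q := by
  by_contra hq
  obtain ⟨h1, h2⟩ := hT
  have hne : a ≠ b := by rintro rfl; exact h1 _ hab
  have hba : ¬ r b a := (h2 a b hne).1 hab
  have hm := hcert (fun y z => (y = b ∧ z = a) ∨ (r y z ∧ ¬ (y = a ∧ z = b)))
    (by
      refine ⟨fun y => ?_, fun y z hyz => ?_⟩
      · have := h1 y
        grind
      · have := h2 y z hyz
        grind)
    (by
      intro y z hyz
      have e1 : ¬ (y = a ∧ z = b) := by
        rintro ⟨rfl, rfl⟩; exact hq (by simpa using hyz)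
      have e2 : ¬ (y = b ∧ z = a) := by
        rintro ⟨rfl, rfl⟩; exact hq (by rw [Sym2.eq_swap]; simpa using hyz)
      simp [e1, e2]) b
  have hx : outDeg (fun y z => (y = b ∧ z = a) ∨ (r y z ∧ ¬ (y = a ∧ z = b))) x
      ≤ outDeg r x := by
    unfold outDeg
    apply Finset.card_le_card
    intro z
    simp only [Finset.mem_filter, Finset.mem_univ, true_and]
    grind
  have hbb : outDeg (fun y z => (y = b ∧ z = a) ∨ (r y z ∧ ¬ (y = a ∧ z = b))) b
      = outDeg r b + 1 := by
    unfold outDeg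
    rw [← Finset.card_insert_of_notMem (a := a) (by simpa using hba)]
    congr 1
    ext z
    simp only [Finset.mem_filter, Finset.mem_univ, true_and, Finset.mem_insert]
    grind
  have := hreg x
  have := hreg b
  omega

open Classical in
theorem aux_inDeg {V : Type*} [Fintype V] (r : V → V → Prop)
    (hT : IsTournament r) (y : V) : outDeg r y + inDeg r y + 1 = Fintype.card V := by
  obtain ⟨h1, h2⟩ := hT
  have e : (Finset.univ.filter fun z => ¬ r y z) =
      insert y (Finset.univ.filter fun z => r z y) := by
    ext z
    simp only [Finset.mem_filter, Finset.mem_univ, true_and, Finset.mem_insert]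
    have := h1 y
    have := h2 y z
    grind
  have h := Finset.card_filter_add_card_filter_not (s := (Finset.univ : Finset V)) (fun z => r y z)
  rw [e, Finset.card_insert_of_notMem (by simpa using h1 y), Finset.card_univ] at h
  unfold outDeg inDeg
  omega

/-- odd regular case lower bound: if every tournament agreeing with `T`
on `Q` has `x` as a vertex of maximum out-degree, then `|Q| ≥ (n-1)²/2`. -/
theorem certificate_lower_bound_odd {V : Type*} [Fintype V] (r : V → V → Prop)
    (hT : IsTournament r) (hn : 3 ≤ Fintype.card V) (hodd : Odd (Fintype.card V))
    (hreg : ∀ y : V, outDeg r y = (Fintype.card V - 1) / 2)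
    (x : V) (Q : Finset (Sym2 V)) (hQ : ∀ p ∈ Q, ¬ p.IsDiag)
    (hcert : ∀ r' : V → V → Prop, IsTournament r' → AgreesOn r r' ↑Q → IsMOD r' x) :
    (Fintype.card V - 1) ^ 2 / 2 ≤ Q.card := by
  classical
  obtain ⟨k, hk⟩ := hodd
  have hk' : (Fintype.card V - 1) / 2 = k := by omega
  rw [hk'] at hreg
  have hin : ∀ y, inDeg r y = k := fun y => by
    have := aux_inDeg r hT y
    have := hreg y
    omega
  let S : Finset (Σ _ : V, V) :=
    (Finset.univ.erase x).sigma (fun b => Finset.univ.filter fun a => r a b)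
  have hS : S.card = 2 * k * k := by
    have h0 : ∀ b ∈ Finset.univ.erase x, (Finset.univ.filter fun a => r a b).card = k := by
      intro b _
      rw [← hin b]
      unfold inDeg
      congr
    rw [Finset.card_sigma, Finset.sum_congr rfl h0, Finset.sum_const,
      Finset.card_erase_of_mem (Finset.mem_univ _), Finset.card_univ, hk]
    simp
  have hle : S.card ≤ Q.card := by
    apply Finset.card_le_card_of_injOn (fun p => s(p.2, p.1))
    · rintro ⟨b, a⟩ hp
      simp [S] at hp
      exact aux_arc_mem r hT k hreg x Q hcert a b hp.2 hp.1
    · rintro ⟨b, a⟩ hp ⟨b', a'⟩ hp' h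
      simp [S] at hp hp'
      simp only [Sym2.eq_iff] at h
      rcases h with ⟨rfl, rfl⟩ | ⟨rfl, rfl⟩
      · rfl
      · have hne : a ≠ b := by rintro rfl; exact hT.1 _ hp.2
        exact absurd hp'.2 ((hT.2 _ _ hne).1 hp.2)
  have : (Fintype.card V - 1) ^ 2 / 2 = 2 * k * k := by
    rw [hk, Nat.add_sub_cancel]
    have : (2 * k) ^ 2 = 2 * (2 * k * k) := by ring
    omega
  omega
end

section
/- Let n ≥ 2 be even, let T be an almost regular tournament on n vertices, let x be a vertex of T, and let Q be a finite set of unordered pairs of distinct vertices. If in every tournament T' on the same vertex set that agrees with T on Q the vertex x is a vertex of maximum out-degree, then |Q| ≥ (n−1)(n−2)/2. -/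
/-- even almost regular case lower bound: if every tournament agreeing
with `T` on `Q` has `x` as a vertex of maximum out-degree, then `|Q| ≥ (n-1)(n-2)/2`. -/
theorem certificate_lower_bound_even {V : Type*} [Fintype V] (r : V → V → Prop)
    (hT : IsTournament r) (hn : 2 ≤ Fintype.card V) (heven : Even (Fintype.card V))
    (har : ∀ w : V, outDeg r w = Fintype.card V / 2 ∨ outDeg r w = Fintype.card V / 2 - 1)
    (x : V) (Q : Finset (Sym2 V)) (hQ : ∀ p ∈ Q, ¬ p.IsDiag)
    (hcert : ∀ r' : V → V → Prop, IsTournament r' → AgreesOn r r' ↑Q → IsMOD r' x) :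
    (Fintype.card V - 1) * (Fintype.card V - 2) / 2 ≤ Q.card := by
  classical
  obtain ⟨m, hm⟩ := heven
  have key : ∀ y, y ≠ x →
      m - 1 ≤ (Finset.univ.filter fun z => r z y ∧ s(z, y) ∈ Q).card := by
    intro y hy
    let r' : V → V → Prop := fun u v =>
      if u = y then v ≠ y ∧ (r y v ∨ s(u, v) ∉ Q)
      else if v = y then r u y ∧ s(u, v) ∈ Q else r u v
    have h1 : IsTournament r' := by
      refine ⟨fun u => ?_, fun u v huv => ?_⟩
      · have := hT.1 u
        simp only [r']
        split_ifs <;> simp_all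
      · have h2 := hT.2 u v huv
        simp only [r']
        rw [Sym2.eq_swap (a := v) (b := u)]
        split_ifs <;> simp_all <;> tauto
    have h2 : AgreesOn r r' (↑Q : Set (Sym2 V)) := by
      intro u v huv
      have h0 : s(u, v) ∈ Q := by simpa using huv
      have hd : u ≠ v := by
        have := hQ _ h0
        simpa using this
      simp only [r']
      split_ifs <;> grind
    have h3 := hcert r' h1 h2 y
    have h4 : outDeg r' x ≤ outDeg r x := by
      unfold outDeg
      apply Finset.card_le_card
      intro z
      simp only [r', Finset.mem_filter, Finset.mem_univ, true_and, if_neg hy.symm]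
      split_ifs with h
      · rw [h]; exact fun h => h.1
      · exact id
    have h5 : outDeg r x ≤ m := by
      rcases har x with h | h <;> omega
    have h6 : (Finset.univ : Finset V) ⊆ ({y} ∪ (Finset.univ.filter fun z => r' y z)) ∪
        (Finset.univ.filter fun z => r z y ∧ s(z, y) ∈ Q) := by
      intro z _
      simp only [r', Finset.mem_union, Finset.mem_singleton, Finset.mem_filter,
        Finset.mem_univ, true_and, if_true]
      by_cases hz : z = y
      · simp [hz]
      · have := hT.2 y z (Ne.symm hz)
        rw [Sym2.eq_swap (a := z) (b := y)]
        tauto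
    have h7 := (Finset.card_le_card h6).trans ((Finset.card_union_le _ _).trans
      (Nat.add_le_add_right (Finset.card_union_le _ _) _))
    have h8 : (Finset.univ.filter fun z => r' y z).card = outDeg r' y := by
      unfold outDeg; congr
    rw [h8, Finset.card_univ, Finset.card_singleton] at h7
    omega
  have hsum : ((Finset.univ.erase x).sigma
      fun y => Finset.univ.filter fun z => r z y ∧ s(z, y) ∈ Q).card ≤ Q.card := by
    apply Finset.card_le_card_of_injOn (fun p => s(p.2, p.1))
    · rintro ⟨y, z⟩ h
      simp at h
      simpa using h.2.2
    · rintro ⟨y, z⟩ h ⟨y', z'⟩ h' he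
      simp at h h' he
      rcases he with ⟨rfl, rfl⟩ | ⟨rfl, rfl⟩
      · rfl
      · exfalso
        have hne : z ≠ y := by
          rintro rfl
          exact hT.1 _ h.2.1
        exact (hT.2 _ _ hne).1 h.2.1 h'.2.1
  rw [Finset.card_sigma] at hsum
  have h9 := Finset.card_nsmul_le_sum (Finset.univ.erase x)
    (fun y => (Finset.univ.filter fun z => r z y ∧ s(z, y) ∈ Q).card) (m - 1)
    (fun y hy => key y (Finset.ne_of_mem_erase hy))
  rw [Finset.card_erase_of_mem (Finset.mem_univ x), Finset.card_univ, smul_eq_mul] at h9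
  have h10 : (Fintype.card V - 1) * (Fintype.card V - 2) / 2
      = (Fintype.card V - 1) * (m - 1) := by
    have : Fintype.card V - 2 = (m - 1) * 2 := by omega
    rw [this, ← mul_assoc, Nat.mul_div_cancel _ (by norm_num)]
  rw [h10]
  exact h9.trans hsum
end

section
/- For every odd integer n ≥ 3 there exists a tournament T on n vertices with the following property: for every vertex x of T and every finite set Q of unordered pairs of distinct vertices, if in every tournament T' on the same vertex set that agrees with T on Q the vertex x is a vertex of maximum out-degree, then |Q| ≥ (n−1)²/2. Hence the worst-case cost of finding a maximum out-degree vertex in a tournament on n vertices (n odd) is at least (n−1)²/2 binary inquiries. -/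
open Classical in
lemma flip_contra {V : Type*} [Fintype V] (r : V → V → Prop) (hr : IsTournament r) (m : ℕ)
    (hd : ∀ v, outDeg r v = m) (x : V) (Q : Set (Sym2 V))
    (h : ∀ r' : V → V → Prop, IsTournament r' → AgreesOn r r' Q → IsMOD r' x)
    (y z : V) (hzy : r z y) (hQ : s(y, z) ∉ Q) : y = x := by
  by_contra hne
  have hyz : y ≠ z := by
    rintro rfl
    exact hr.1 _ hzy
  have hnyz : ¬ r y z := fun hh => ((hr.2 y z hyz).1 hh) hzy
  let r' : V → V → Prop := fun a b => (a = y ∧ b = z) ∨ (r a b ∧ ¬ (a = z ∧ b = y))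
  have hT : IsTournament r' := by
    refine ⟨fun a ha => ?_, fun a b hab => ?_⟩
    · rcases ha with ⟨h1, h2⟩ | ⟨h1, _⟩
      · exact hyz (h1.symm.trans h2)
      · exact hr.1 _ h1
    · have := hr.2 a b hab
      by_cases h1 : a = y <;> by_cases h2 : b = z <;> by_cases h3 : a = z <;>
        by_cases h4 : b = y <;> simp_all [r']
  have hA : AgreesOn r r' Q := by
    intro a b hab
    have h1 : ¬ (a = y ∧ b = z) := by
      rintro ⟨rfl, rfl⟩
      exact hQ hab
    have h2 : ¬ (a = z ∧ b = y) := by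
      rintro ⟨rfl, rfl⟩
      exact hQ (Sym2.eq_swap ▸ hab)
    simp only [r']
    tauto
  have hM := h r' hT hA y
  have hx : outDeg r' x ≤ m := by
    rw [← hd x]
    unfold outDeg
    apply Finset.card_le_card
    intro w hw
    simp only [Finset.mem_filter, Finset.mem_univ, true_and, r'] at hw ⊢
    rcases hw with hw | hw
    · exact absurd hw.1.symm hne
    · exact hw.1
  have hy : m + 1 ≤ outDeg r' y := by
    rw [← hd y]
    unfold outDeg
    rw [← Finset.card_insert_of_notMem (a := z) (by simpa using hnyz)]
    apply Finset.card_le_card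
    intro w hw
    simp only [Finset.mem_insert, Finset.mem_filter, Finset.mem_univ, true_and, r'] at hw ⊢
    rcases hw with hw | hw
    · exact Or.inl (by simpa using hw)
    · exact Or.inr ⟨hw, fun hh => hyz hh.1⟩
  omega

def circT (m : ℕ) (i j : Fin (2 * m + 1)) : Prop := 0 < (j - i).val ∧ (j - i).val ≤ m

lemma circ_card (m : ℕ) :
    (Finset.univ.filter fun k : Fin (2 * m + 1) => 0 < k.val ∧ k.val ≤ m).card = m := by
  rw [← Finset.card_map Fin.valEmbedding]
  have : (Finset.univ.filter fun k : Fin (2 * m + 1) => 0 < k.val ∧ k.val ≤ m).map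
      Fin.valEmbedding = Finset.Icc 1 m := by
    ext a
    simp only [Finset.mem_map, Finset.mem_filter, Finset.mem_univ, true_and,
      Fin.valEmbedding_apply, Finset.mem_Icc]
    constructor
    · rintro ⟨k, hk, rfl⟩
      omega
    · intro ha
      exact ⟨⟨a, by omega⟩, by simp; omega, rfl⟩
  rw [this]
  simp

open Classical in
lemma circ_out (m : ℕ) (i : Fin (2 * m + 1)) : outDeg (circT m) i = m := by
  unfold outDeg
  refine Eq.trans ?_ (circ_card m)
  refine Finset.card_bij' (fun j _ => j - i) (fun k _ => k + i) ?_ ?_ ?_ ?_ <;>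
    simp [circT]

open Classical in
lemma circ_in (m : ℕ) (i : Fin (2 * m + 1)) :
    (Finset.univ.filter fun j => circT m j i).card = m := by
  refine Eq.trans ?_ (circ_card m)
  refine Finset.card_bij' (fun j _ => i - j) (fun k _ => i - k) ?_ ?_ ?_ ?_ <;>
    simp [circT]

lemma circ_tour (m : ℕ) : IsTournament (circT m) := by
  refine ⟨fun x => by simp [circT], fun x y hxy => ?_⟩
  have hx := x.isLt
  have hy := y.isLt
  have hne : x.val ≠ y.val := fun h => hxy (Fin.ext h)
  unfold circT
  rcases lt_or_gt_of_ne hne with h | h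
  · rw [Fin.sub_val_of_le (show x ≤ y from h.le), Fin.val_sub,
      Nat.mod_eq_of_lt (by omega)]
    omega
  · rw [Fin.sub_val_of_le (show y ≤ x from h.le), Fin.val_sub,
      Nat.mod_eq_of_lt (by omega)]
    omega

/-- for every odd `n ≥ 3` there is a tournament on `n` vertices such that
any query set `Q` certifying some vertex `x` as a vertex of maximum out-degree satisfies
`|Q| ≥ (n-1)²/2`. -/
theorem worst_case_cost_odd (n : ℕ) (hn : 3 ≤ n) (hodd : Odd n) :
    ∃ r : Fin n → Fin n → Prop, IsTournament r ∧
      ∀ (x : Fin n) (Q : Finset (Sym2 (Fin n))), (∀ p ∈ Q, ¬ p.IsDiag) →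
        (∀ r' : Fin n → Fin n → Prop, IsTournament r' → AgreesOn r r' ↑Q → IsMOD r' x) →
        (n - 1) ^ 2 / 2 ≤ Q.card := by
  classical
  obtain ⟨m, rfl⟩ := hodd
  refine ⟨circT m, circ_tour m, fun x Q _ h => ?_⟩
  have key := flip_contra (circT m) (circ_tour m) m (circ_out m) x ↑Q h
  have hsub : (Finset.univ.filter fun p : Sym2 (Fin (2 * m + 1)) => ¬ p.IsDiag) ⊆
      Q ∪ (Finset.univ.filter fun j => circT m j x).image (fun j => s(x, j)) := by
    intro p
    induction p using Sym2.ind with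
    | _ a b =>
      intro hp
      have hab : a ≠ b := by simpa using hp
      rw [Finset.mem_union]
      by_cases hq : s(a, b) ∈ Q
      · exact Or.inl hq
      right
      rw [Finset.mem_image]
      by_cases hr : circT m b a
      · have := key a b hr (by simpa using hq)
        subst this
        exact ⟨b, by simpa using hr, rfl⟩
      · have hr' := ((circ_tour m).2 a b hab).2 hr
        have := key b a hr' (by rw [Sym2.eq_swap]; simpa using hq)
        subst this
        exact ⟨a, by simpa using hr', Sym2.eq_swap⟩
  have h1 := (Finset.card_le_card hsub).trans (Finset.card_union_le _ _)
  have h2 := (Finset.card_image_le (s := Finset.univ.filter fun j => circT m j x)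
    (f := fun j => s(x, j)))
  rw [circ_in] at h2
  have h3 : (Finset.univ.filter fun p : Sym2 (Fin (2 * m + 1)) => ¬ p.IsDiag).card
      = (2 * m + 1).choose 2 := by
    rw [← Fintype.card_subtype, Sym2.card_subtype_not_diag, Fintype.card_fin]
  have h4 : (2 * m + 1).choose 2 = 2 * m ^ 2 + m := by
    rw [Nat.choose_two_right]
    apply Nat.div_eq_of_eq_mul_left (by norm_num)
    rw [Nat.add_sub_cancel]
    ring
  have h5 : (2 * m + 1 - 1) ^ 2 / 2 = 2 * m ^ 2 := by
    apply Nat.div_eq_of_eq_mul_left (by norm_num)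
    rw [Nat.add_sub_cancel]
    ring
  omega
end

section
/- For every even integer n ≥ 2 there exists a tournament T on n vertices with the following property: for every vertex x of T and every finite set Q of unordered pairs of distinct vertices, if in every tournament T' on the same vertex set that agrees with T on Q the vertex x is a vertex of maximum out-degree, then |Q| ≥ (n−1)(n−2)/2. Hence the worst-case cost of finding a maximum out-degree vertex in a tournament on n vertices (n even) is at least (n−1)(n−2)/2 binary inquiries. -/
def rotT (n : ℕ) (x y : Fin n) : Prop :=
  (x.val < y.val ∧ (y.val - x.val) % 2 = 1) ∨ (y.val < x.val ∧ (x.val - y.val) % 2 = 0)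

theorem rotT_tour (n : ℕ) : IsTournament (rotT n) := by
  refine ⟨fun x => by unfold rotT; omega, fun x y h => ?_⟩
  have : x.val ≠ y.val := fun h' => h (Fin.ext h')
  unfold rotT; omega

theorem rotT_deg (m : ℕ) (x : Fin (m + m)) : outDeg (rotT (m + m)) x ≤ m := by
  classical
  unfold outDeg
  conv_rhs => rw [← Finset.card_range m]
  apply Finset.card_le_card_of_injOn (fun y => y.val / 2)
  · intro y _
    simp only [Finset.coe_range, Set.mem_Iio]
    omega
  · intro a ha b hb hab
    have ha := (Finset.mem_filter.1 (Finset.mem_coe.1 ha)).2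
    have hb := (Finset.mem_filter.1 (Finset.mem_coe.1 hb)).2
    unfold rotT at ha hb
    simp only at hab
    ext
    omega

open Classical in
def advT {V : Type*} (r : V → V → Prop) (Q : Finset (Sym2 V)) (x y a b : V) : Prop :=
  a ≠ b ∧ if s(a, b) ∈ Q then r a b else
    if a = y then True else if b = y then False else
    if a = x then False else if b = x then True else r a b

theorem advT_tour {V : Type*} (r : V → V → Prop) (hr : IsTournament r) (Q : Finset (Sym2 V))
    (x y : V) : IsTournament (advT r Q x y) := by
  refine ⟨fun x => by simp [advT], fun a b h => ?_⟩
  have h1 := hr.2 a b h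
  have h2 : s(b, a) = s(a, b) := Sym2.eq_swap
  unfold advT
  rw [h2]
  grind

theorem key {V : Type*} [Fintype V] [DecidableEq V] (r : V → V → Prop) (hr : IsTournament r)
    (Q : Finset (Sym2 V)) (x : V)
    (H : ∀ r' : V → V → Prop, IsTournament r' → AgreesOn r r' ↑Q → IsMOD r' x)
    (I : V → Finset V) (hI : ∀ y z, z ∈ I y ↔ s(z, y) ∈ Q ∧ r z y) (y : V) (hy : y ≠ x) :
    Fintype.card V ≤ outDeg r x + (I y).card + 1 := by
  classical
  have h1 := H (advT r Q x y) (advT_tour r hr Q x y) (by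
    intro a b hab
    have : a = b → ¬ r a b := by rintro rfl; exact hr.1 a
    have hab' : s(a, b) ∈ Q := hab
    simp only [advT, hab', if_true]
    tauto) y
  have h2 : outDeg (advT r Q x y) x ≤ outDeg r x := by
    unfold outDeg
    apply Finset.card_le_card
    intro b
    simp only [Finset.mem_filter, Finset.mem_univ, true_and, advT]
    grind
  have h3 : (Finset.univ : Finset V) ⊆
      (Finset.univ.filter fun z => advT r Q x y y z) ∪ I y ∪ {y} := by
    intro z _
    simp only [Finset.mem_union, Finset.mem_filter, Finset.mem_univ, true_and, hI,
      Finset.mem_singleton, advT]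
    have h2 : s(y, z) = s(z, y) := Sym2.eq_swap
    have := hr.2 y z
    rw [h2]
    grind
  have h4 := Finset.card_le_card h3
  have h5 := Finset.card_union_le ((Finset.univ.filter fun z => advT r Q x y y z) ∪ I y) {y}
  have h6 := Finset.card_union_le (Finset.univ.filter fun z => advT r Q x y y z) (I y)
  have h7 : (Finset.univ.filter fun z => advT r Q x y y z).card = outDeg (advT r Q x y) y := rfl
  rw [Finset.card_univ] at h4
  rw [Finset.card_singleton] at h5
  omega

/-- for every even `n ≥ 2` there is a tournament on `n` vertices such that
any query set `Q` certifying some vertex `x` as a vertex of maximum out-degree satisfies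
`|Q| ≥ (n-1)(n-2)/2`. -/
theorem worst_case_cost_even (n : ℕ) (hn : 2 ≤ n) (heven : Even n) :
    ∃ r : Fin n → Fin n → Prop, IsTournament r ∧
      ∀ (x : Fin n) (Q : Finset (Sym2 (Fin n))), (∀ p ∈ Q, ¬ p.IsDiag) →
        (∀ r' : Fin n → Fin n → Prop, IsTournament r' → AgreesOn r r' ↑Q → IsMOD r' x) →
        (n - 1) * (n - 2) / 2 ≤ Q.card := by
  classical
  obtain ⟨m, rfl⟩ := heven
  refine ⟨rotT (m + m), rotT_tour _, fun x Q _ H => ?_⟩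
  have hr := rotT_tour (m + m)
  generalize hR : rotT (m + m) = r at *
  have hd : outDeg r x ≤ m := hR ▸ rotT_deg m x
  let I : Fin (m + m) → Finset (Fin (m + m)) :=
    fun y => Finset.univ.filter fun z => s(z, y) ∈ Q ∧ r z y
  have hI : ∀ y z, z ∈ I y ↔ s(z, y) ∈ Q ∧ r z y := by intro y z; simp [I]
  have hk := key r hr Q x H I hI
  have hs : ((Finset.univ.erase x).sigma I).card ≤ Q.card := by
    apply Finset.card_le_card_of_injOn (fun p => s(p.2, p.1))
    · rintro ⟨y, z⟩ hp
      simp only [Finset.coe_sigma, Set.mem_sigma_iff, Finset.mem_coe, hI] at hp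
      exact hp.2.1
    · rintro ⟨y, z⟩ hp ⟨y', z'⟩ hp' he
      simp only [Finset.coe_sigma, Set.mem_sigma_iff, Finset.mem_coe, hI] at hp hp'
      simp only [Sym2.eq_iff] at he
      rcases he with ⟨rfl, rfl⟩ | ⟨rfl, rfl⟩
      · rfl
      · exfalso
        have h0 := hr.1 z
        have h1 := hr.2 z y
        by_cases h : z = y
        · subst h; exact h0 hp.2.2
        · exact (h1 h).1 hp.2.2 hp'.2.2
  rw [Finset.card_sigma] at hs
  have hl := Finset.card_nsmul_le_sum (Finset.univ.erase x) (fun y => (I y).card) (m - 1) (by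
    intro y hy
    have := hk y (Finset.ne_of_mem_erase hy)
    rw [Fintype.card_fin] at this
    omega)
  rw [Finset.card_erase_of_mem (Finset.mem_univ x), Finset.card_univ, Fintype.card_fin,
    smul_eq_mul] at hl
  have e : (m + m - 1) * (m + m - 2) = ((m + m - 1) * (m - 1)) * 2 := by
    rw [mul_assoc]; congr 1; omega
  rw [e, Nat.mul_div_cancel _ (by norm_num)]
  exact hl.trans hs
end
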